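/- For every n ≥ 1 and every integer t ≥ n, the number of n×n matrices with positive integer entries and all row and column sums equal to t is equal to (−1)^{(n−1)^2} H_n(−t), where H_n is the Ehrhart polynomial of the Birkhoff polytope B_n. -/

import Mathlib

/-!
Count the semi-magic squares with line sum `s` by their support; the possible supports are the
faces of the cone of nonnegative real semi-magic squares. By the Birkhoff-von Neumann theorem
every nonempty face contains a permutation matrix `v`. Subtracting `v` gives recursions in `s`
both for the number of squares supported in a face `E` (the closed count) and for the number of
squares with support exactly `E` (the open count), in terms of faces that do not contain the
support of `v`.

Consider the function on `ℤ` equal to the closed count of `E` at `s ≥ 0` and to the signed open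
count at `-s < 0`. The sum of `(-1) ^ dim F` over the faces `F` between two faces `G` and `E`
vanishes unless `G = E`, and this turns the two recursions into a single difference equation,
valid on all of `ℤ`, whose right-hand side only involves proper faces of `E`. By induction the
function is a polynomial on `ℤ`, and that is reciprocity: the counts at positive and at negative
arguments are values of one polynomial.

The Euler relation for the faces comes from cutting a cone by coordinate hyperplanes: a relatively
open convex cell is the union of its two open halves and their common wall, of one dimension less.
-/

open scoped Polynomial

section PolynomialFunctions

open Polynomial

theorem exists_comp_X_add_one_sub_self (q : ℚ[X]) : ∃ p : ℚ[X], p.comp (X + 1) - p = q := by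
  induction q using Polynomial.induction_on' with
  | add q₁ q₂ h₁ h₂ =>
    obtain ⟨p₁, rfl⟩ := h₁
    obtain ⟨p₂, rfl⟩ := h₂
    exact ⟨p₁ + p₂, by rw [add_comp]; ring⟩
  | monomial n a =>
    refine ⟨C (a / (n + 1)) * Polynomial.bernoulli (n + 1), Polynomial.funext fun x => ?_⟩
    have hB := bernoulli_eval_one_add (n + 1) x
    have hn : (n : ℚ) + 1 ≠ 0 := by positivity
    simp only [eval_sub, eval_mul, eval_C, eval_comp, eval_add, eval_X, eval_one, eval_monomial,
      add_comm x 1, hB, Nat.add_sub_cancel, Nat.cast_add, Nat.cast_one]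
    field_simp
    ring

theorem exists_polynomial_of_sub_eq_eval {g : ℤ → ℚ} {q : ℚ[X]}
    (hg : ∀ k : ℤ, g k - g (k - 1) = q.eval (k : ℚ)) :
    ∃ p : ℚ[X], ∀ k : ℤ, p.eval (k : ℚ) = g k := by
  obtain ⟨p, hp⟩ := exists_comp_X_add_one_sub_self (q.comp (X + 1))
  have hpk (k : ℤ) : p.eval ((k : ℚ) + 1) - p.eval (k : ℚ) = g (k + 1) - g k := by
    have h := congrArg (eval (k : ℚ)) hp
    have hgk := hg (k + 1)
    simp only [eval_sub, eval_comp, eval_add, eval_X, eval_one] at h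
    rw [add_sub_cancel_right] at hgk
    rw [h, hgk, Int.cast_add, Int.cast_one]
  refine ⟨p + C (g 0 - p.eval 0), fun k => ?_⟩
  rw [eval_add, eval_C]
  induction k using Int.induction_on with
  | zero => simp
  | succ k ih =>
    have h := hpk k
    push_cast at ih h ⊢
    linarith
  | pred k ih =>
    have h := hpk (-k - 1)
    rw [sub_add_cancel] at h
    push_cast at ih h ⊢
    rw [sub_add_cancel] at h
    linarith

theorem eq_of_forall_eval_natCast_eq {R : Type*} [CommRing R] [IsDomain R] [CharZero R] {p q : R[X]}
    (h : ∀ s : ℕ, 0 < s → p.eval (s : R) = q.eval (s : R)) : p = q := by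
  refine eq_of_infinite_eval_eq p q <|
    ((Set.Ioi_infinite 0).image (Nat.cast_injective (R := R)).injOn).mono ?_
  rintro _ ⟨s, hs, rfl⟩
  exact h s hs

end PolynomialFunctions

section EulerCharacteristic

variable {ι K : Type*} [Field K]

/-- The coordinate subspace of vectors that vanish on `Z`. -/
def vanishingOn (K : Type*) [Field K] (Z : Finset ι) : Submodule K (ι → K) :=
  Submodule.pi Z fun _ => ⊥

theorem mem_vanishingOn {Z : Finset ι} {x : ι → K} : x ∈ vanishingOn K Z ↔ ∀ i ∈ Z, x i = 0 := by
  simp [vanishingOn, Submodule.mem_pi]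

theorem mem_vanishingOn_singleton {a : ι} {x : ι → K} : x ∈ vanishingOn K {a} ↔ x a = 0 := by
  simp [mem_vanishingOn]

@[simp]
theorem vanishingOn_empty : vanishingOn K (∅ : Finset ι) = ⊤ :=
  eq_top_iff.2 fun x _ => mem_vanishingOn.2 (by simp)

theorem vanishingOn_union [DecidableEq ι] (Y Z : Finset ι) :
    vanishingOn K (Y ∪ Z) = vanishingOn K Y ⊓ vanishingOn K Z := by
  ext x
  simp only [Submodule.mem_inf, mem_vanishingOn, Finset.mem_union, or_imp, forall_and]

theorem vanishingOn_insert [DecidableEq ι] (a : ι) (Z : Finset ι) :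
    vanishingOn K (insert a Z) = vanishingOn K Z ⊓ vanishingOn K {a} := by
  rw [Finset.insert_eq, vanishingOn_union, inf_comm]

theorem finrank_inf_vanishingOn_singleton_add_one [Finite ι] {V : Submodule K (ι → K)} {a : ι}
    {y : ι → K} (hy : y ∈ V) (hya : y a ≠ 0) :
    Module.finrank K ↥(V ⊓ vanishingOn K {a}) + 1 = Module.finrank K V := by
  let f : Module.Dual K V := LinearMap.proj a ∘ₗ V.subtype
  have hf : f ≠ 0 := fun h => hya (LinearMap.congr_fun h ⟨y, hy⟩)
  have hker : V ⊓ vanishingOn K {a} = (LinearMap.ker f).map V.subtype := by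
    ext x
    simp [mem_vanishingOn, f, and_comm]
  rw [hker, Submodule.finrank_map_subtype_eq, Module.Dual.finrank_ker_add_one_of_ne_zero hf]

variable [LinearOrder K]

/-- The open sector of vectors that are positive on `P` and negative on `N`. -/
def signCell (K : Type*) [Field K] [LinearOrder K] (P N : Finset ι) : Set (ι → K) :=
  {x | (∀ i ∈ P, 0 < x i) ∧ ∀ i ∈ N, x i < 0}

open scoped Classical in
/-- The compactly supported Euler characteristic of the relatively open convex set
`V ∩ signCell K P N`, which is a cell of dimension `dim V` when it is nonempty. -/
noncomputable def cellEuler (V : Submodule K (ι → K)) (P N : Finset ι) : ℤ :=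
  if ((V : Set (ι → K)) ∩ signCell K P N).Nonempty then (-1) ^ Module.finrank K V else 0

/-- The compactly supported Euler characteristic of the cone of vectors of `V` that are nonnegative
on `A` and negative on `N`, summed over the cells cut out by fixing the set `P ⊆ A` of positive
coordinates. -/
noncomputable def coneEuler [DecidableEq ι] (V : Submodule K (ι → K)) (A N : Finset ι) : ℤ :=
  ∑ P ∈ A.powerset, cellEuler (V ⊓ vanishingOn K (A \ P)) P N

variable {P N : Finset ι}

theorem mem_signCell_insert_left [DecidableEq ι] {a : ι} {x : ι → K} :
    x ∈ signCell K (insert a P) N ↔ 0 < x a ∧ x ∈ signCell K P N := by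
  simp only [signCell, Set.mem_ofPred_eq, Finset.forall_mem_insert, and_assoc]

theorem mem_signCell_insert_right [DecidableEq ι] {a : ι} {x : ι → K} :
    x ∈ signCell K P (insert a N) ↔ x a < 0 ∧ x ∈ signCell K P N := by
  simp only [signCell, Set.mem_ofPred_eq, Finset.forall_mem_insert, and_left_comm]

variable [IsStrictOrderedRing K]

theorem add_mem_signCell {x y : ι → K} (hx : x ∈ signCell K P N) (hy : y ∈ signCell K P N) :
    x + y ∈ signCell K P N :=
  ⟨fun i hi => add_pos (hx.1 i hi) (hy.1 i hi), fun i hi => add_neg (hx.2 i hi) (hy.2 i hi)⟩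

theorem smul_mem_signCell {c : K} (hc : 0 < c) {x : ι → K} (hx : x ∈ signCell K P N) :
    c • x ∈ signCell K P N :=
  ⟨fun i hi => mul_pos hc (hx.1 i hi), fun i hi => mul_neg_of_pos_of_neg hc (hx.2 i hi)⟩

theorem eventually_smul_add_mem_signCell {x : ι → K} (hx : x ∈ signCell K P N) (y : ι → K) :
    ∀ᶠ c : K in Filter.atTop, c • x + y ∈ signCell K P N := by
  have hpos (i) (hi : i ∈ P) : ∀ᶠ c : K in Filter.atTop, 0 < c * x i + y i :=
    (Filter.tendsto_atTop_add_const_right _ _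
      (Filter.tendsto_id.atTop_mul_const (hx.1 i hi))).eventually_gt_atTop 0
  have hneg (i) (hi : i ∈ N) : ∀ᶠ c : K in Filter.atTop, c * x i + y i < 0 :=
    (Filter.tendsto_atBot_add_const_right _ _
      (Filter.tendsto_id.atTop_mul_const_of_neg (hx.2 i hi))).eventually_lt_atBot 0
  exact ((Filter.eventually_all_finset P).2 hpos).and ((Filter.eventually_all_finset N).2 hneg)

/-- A vector on the hyperplane `x a = 0` can be pushed off to either side along `y`; conversely the
segment between the two sides crosses the hyperplane. -/
theorem inter_signCell_vanishing_nonempty_iff [DecidableEq ι] {V : Submodule K (ι → K)} {a : ι}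
    {y : ι → K} (hy : y ∈ V) (hya : y a ≠ 0) :
    (((V ⊓ vanishingOn K {a} : Submodule K (ι → K)) : Set (ι → K)) ∩ signCell K P N).Nonempty ↔
      ((V : Set (ι → K)) ∩ signCell K (insert a P) N).Nonempty ∧
        ((V : Set (ι → K)) ∩ signCell K P (insert a N)).Nonempty := by
  constructor
  · rintro ⟨x, ⟨hxV, hxa⟩, hx⟩
    rw [SetLike.mem_coe, mem_vanishingOn_singleton] at hxa
    obtain ⟨c, hc, hc'⟩ := ((eventually_smul_add_mem_signCell hx y).and
      (eventually_smul_add_mem_signCell hx (-y))).exists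
    have hV : c • x + y ∈ V := V.add_mem (V.smul_mem c hxV) hy
    have hV' : c • x + -y ∈ V := V.add_mem (V.smul_mem c hxV) (V.neg_mem hy)
    simp only [Set.Nonempty, Set.mem_inter_iff, mem_signCell_insert_left, mem_signCell_insert_right]
    rcases hya.lt_or_gt with hlt | hgt
    · exact ⟨⟨_, hV', by simpa [hxa], hc'⟩, ⟨_, hV, by simpa [hxa], hc⟩⟩
    · exact ⟨⟨_, hV, by simpa [hxa], hc⟩, ⟨_, hV', by simpa [hxa], hc'⟩⟩
  · rintro ⟨⟨p, hpV, hp⟩, ⟨m, hmV, hm⟩⟩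
    obtain ⟨hpa, hp⟩ := mem_signCell_insert_left.1 hp
    obtain ⟨hma, hm⟩ := mem_signCell_insert_right.1 hm
    refine ⟨-m a • p + p a • m, ⟨V.add_mem (V.smul_mem _ hpV) (V.smul_mem _ hmV),
      mem_vanishingOn_singleton.2 ?_⟩,
      add_mem_signCell (smul_mem_signCell (neg_pos.2 hma) hp) (smul_mem_signCell hpa hm)⟩
    simp only [Pi.add_apply, Pi.smul_apply, smul_eq_mul]
    ring

theorem cellEuler_split [Finite ι] [DecidableEq ι] (V : Submodule K (ι → K)) (P N : Finset ι)
    (a : ι) :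
    cellEuler (V ⊓ vanishingOn K {a}) P N + cellEuler V (insert a P) N +
      cellEuler V P (insert a N) = cellEuler V P N := by
  by_cases hV : ∀ y ∈ V, y a = 0
  · have hle : V ⊓ vanishingOn K {a} = V :=
      inf_eq_left.2 fun y hy => mem_vanishingOn_singleton.2 (hV y hy)
    have hpos : ¬ ((V : Set (ι → K)) ∩ signCell K (insert a P) N).Nonempty := fun ⟨x, hxV, hx⟩ =>
      (mem_signCell_insert_left.1 hx).1.ne' (hV x hxV)
    have hneg : ¬ ((V : Set (ι → K)) ∩ signCell K P (insert a N)).Nonempty := fun ⟨x, hxV, hx⟩ =>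
      (mem_signCell_insert_right.1 hx).1.ne (hV x hxV)
    rw [hle]
    simp only [cellEuler, hpos, hneg, if_false, add_zero]
  · push Not at hV
    obtain ⟨y, hy, hya⟩ := hV
    have hzero := inter_signCell_vanishing_nonempty_iff (P := P) (N := N) hy hya
    have hany : ((V : Set (ι → K)) ∩ signCell K P N).Nonempty ↔
        ((V : Set (ι → K)) ∩ signCell K (insert a P) N).Nonempty ∨
          ((V : Set (ι → K)) ∩ signCell K P (insert a N)).Nonempty := by
      constructor
      · rintro ⟨x, hxV, hx⟩
        rcases lt_trichotomy (x a) 0 with h | h | h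
        · exact Or.inr ⟨x, hxV, mem_signCell_insert_right.2 ⟨h, hx⟩⟩
        · exact Or.inl (hzero.1 ⟨x, ⟨hxV, mem_vanishingOn_singleton.2 h⟩, hx⟩).1
        · exact Or.inl ⟨x, hxV, mem_signCell_insert_left.2 ⟨h, hx⟩⟩
      · rintro (⟨x, hxV, hx⟩ | ⟨x, hxV, hx⟩)
        · exact ⟨x, hxV, (mem_signCell_insert_left.1 hx).2⟩
        · exact ⟨x, hxV, (mem_signCell_insert_right.1 hx).2⟩
    simp only [cellEuler, hzero, hany, ← finrank_inf_vanishingOn_singleton_add_one hy hya]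
    split_ifs <;> first | tauto | ring

theorem coneEuler_insert [Finite ι] [DecidableEq ι] (V : Submodule K (ι → K)) {A : Finset ι} {a : ι}
    (ha : a ∉ A) (N : Finset ι) :
    coneEuler V (insert a A) N = coneEuler V A N - coneEuler V A (insert a N) := by
  rw [coneEuler, Finset.sum_powerset_insert ha, coneEuler, coneEuler, ← Finset.sum_add_distrib,
    ← Finset.sum_sub_distrib]
  refine Finset.sum_congr rfl fun P hP => ?_
  have haP : a ∉ P := fun h => ha (Finset.mem_powerset.1 hP h)
  rw [← cellEuler_split (V ⊓ vanishingOn K (A \ P)) P N a, Finset.insert_sdiff_of_notMem _ haP,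
    Finset.insert_sdiff_insert, Finset.sdiff_insert_of_notMem ha, vanishingOn_insert, inf_assoc]
  ring

theorem coneEuler_eq_zero [Finite ι] [DecidableEq ι] {V : Submodule K (ι → K)} {A N : Finset ι}
    (hA : A.Nonempty) {w : ι → K} (hwV : w ∈ V) (hwA : ∀ i ∈ A, w i < 0) (hwN : ∀ i ∈ N, w i < 0) :
    coneEuler V A N = 0 := by
  induction hA using Finset.Nonempty.cons_induction generalizing N with
  | singleton a =>
    have hN : ((V : Set (ι → K)) ∩ signCell K ∅ N).Nonempty := ⟨w, hwV, by simp, hwN⟩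
    have haN : ((V : Set (ι → K)) ∩ signCell K ∅ (insert a N)).Nonempty :=
      ⟨w, hwV, by simp, Finset.forall_mem_insert .. |>.2 ⟨hwA a (by simp), hwN⟩⟩
    rw [← insert_empty_eq, coneEuler_insert V (Finset.notMem_empty a)]
    simp [coneEuler, cellEuler, hN, haN]
  | cons a A ha _ ih =>
    rw [Finset.cons_eq_insert, coneEuler_insert V ha]
    rw [Finset.forall_mem_cons] at hwA
    rw [ih hwA.2 hwN, ih hwA.2 (Finset.forall_mem_insert .. |>.2 ⟨hwA.1, hwN⟩), sub_zero]

end EulerCharacteristic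

section Faces

variable {ι K : Type*} [Field K] [LinearOrder K] {W : Submodule K (ι → K)} {E F G S : Finset ι}

/-- `F` is the support of a nonnegative vector of `W`; these supports index the faces of the cone of
nonnegative vectors of `W`. -/
def IsFace (W : Submodule K (ι → K)) (F : Finset ι) : Prop :=
  ∃ x ∈ W, (∀ i ∈ F, 0 < x i) ∧ ∀ i ∉ F, x i = 0

open scoped Classical in
/-- `(-1) ^ d` when `F` indexes a face of dimension `d` of the cone of nonnegative vectors of `W`,
and `0` when `F` does not index a face. -/
noncomputable def faceSign [Fintype ι] [DecidableEq ι] (W : Submodule K (ι → K))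
    (F : Finset ι) : ℤ :=
  if IsFace W F then (-1) ^ Module.finrank K ↥(W ⊓ vanishingOn K Fᶜ) else 0

theorem isFace_empty (W : Submodule K (ι → K)) : IsFace W ∅ :=
  ⟨0, W.zero_mem, by simp, by simp⟩

theorem faceSign_empty [Fintype ι] [DecidableEq ι] (W : Submodule K (ι → K)) :
    faceSign W ∅ = 1 := by
  have hbot : W ⊓ vanishingOn K (∅ : Finset ι)ᶜ = ⊥ :=
    (Submodule.eq_bot_iff _).2 fun x hx => funext fun i => mem_vanishingOn.1 hx.2 i (by simp)
  rw [faceSign, if_pos (isFace_empty W), hbot, finrank_bot, pow_zero]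

theorem faceSign_univ [Fintype ι] [DecidableEq ι] (hW : IsFace W Finset.univ) :
    faceSign W Finset.univ = (-1) ^ Module.finrank K W := by
  rw [faceSign, if_pos hW, Finset.compl_univ, vanishingOn_empty, inf_top_eq]

theorem IsFace.faceSign_mul_self [Fintype ι] [DecidableEq ι] (hF : IsFace W F) :
    faceSign W F * faceSign W F = 1 := by
  rw [faceSign, if_pos hF, ← mul_pow, neg_one_mul, neg_neg, one_pow]

variable [IsStrictOrderedRing K]

theorem IsFace.isFace_union_iff [Fintype ι] [DecidableEq ι] (hG : IsFace W G) (P : Finset ι) :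
    IsFace W (G ∪ P) ↔ (((W ⊓ vanishingOn K (G ∪ P)ᶜ : Submodule K (ι → K)) : Set (ι → K)) ∩
      signCell K P ∅).Nonempty := by
  constructor
  · rintro ⟨x, hxW, hpos, hzero⟩
    exact ⟨x, ⟨hxW, mem_vanishingOn.2 fun i hi => hzero i (Finset.mem_compl.1 hi)⟩,
      fun i hi => hpos i (Finset.mem_union_right G hi), by simp⟩
  · rintro ⟨x, ⟨hxW, hx⟩, hpos, -⟩
    obtain ⟨g, hgW, hgpos, hgzero⟩ := hG
    have hg : g ∈ signCell K G ∅ := ⟨hgpos, by simp⟩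
    obtain ⟨c, hc⟩ := (eventually_smul_add_mem_signCell hg x).exists
    refine ⟨c • g + x, W.add_mem (W.smul_mem c hgW) hxW, fun i hi => ?_, fun i hi => ?_⟩
    · by_cases hiG : i ∈ G
      · exact hc.1 i hiG
      · have hiP : i ∈ P := (Finset.mem_union.1 hi).resolve_left hiG
        simpa [hgzero i hiG] using hpos i hiP
    · have hxi : x i = 0 := mem_vanishingOn.1 hx i (Finset.mem_compl.2 hi)
      simp [hxi, hgzero i fun h => hi (Finset.mem_union_left P h)]

theorem IsFace.union [Finite ι] [DecidableEq ι] (hF : IsFace W F) (hG : IsFace W G) :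
    IsFace W (F ∪ G) := by
  cases nonempty_fintype ι
  obtain ⟨x, hxW, hpos, hzero⟩ := hG
  refine (hF.isFace_union_iff G).2 ⟨x, ⟨hxW, mem_vanishingOn.2 fun i hi => hzero i fun h => ?_⟩,
    hpos, by simp⟩
  exact Finset.mem_compl.1 hi (Finset.mem_union_right F h)

/-- Adding a large multiple of a vector with support `G` makes any vector positive on `G`, so the
signs on `G` can be disregarded. -/
theorem sum_faceSign_Icc_eq_coneEuler [Fintype ι] [DecidableEq ι] (hG : IsFace W G) (hGE : G ⊆ E) :
    ∑ F ∈ Finset.Icc G E, faceSign W F = coneEuler (W ⊓ vanishingOn K Eᶜ) (E \ G) ∅ := by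
  have hdisj {P : Finset ι} (hP : P ⊆ E \ G) : Disjoint G P :=
    Finset.disjoint_sdiff.mono_right hP
  have hinj : Set.InjOn (G ∪ ·) ((E \ G).powerset : Set (Finset ι)) := fun P hP Q hQ h => by
    rw [← (hdisj (Finset.mem_powerset.1 hP)).sup_sdiff_cancel_left,
      ← (hdisj (Finset.mem_powerset.1 hQ)).sup_sdiff_cancel_left]
    exact congrArg (· \ G) h
  rw [Finset.Icc_eq_image_powerset hGE, Finset.sum_image hinj, coneEuler]
  refine Finset.sum_congr rfl fun P hP => ?_
  have hcompl : (G ∪ P)ᶜ = Eᶜ ∪ (E \ G) \ P := by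
    have hPE := (Finset.mem_powerset.1 hP).trans Finset.sdiff_subset
    ext i
    have hGi := @hGE i
    have hPi := @hPE i
    simp only [Finset.mem_compl, Finset.mem_union, Finset.mem_sdiff]
    tauto
  have hspan : W ⊓ vanishingOn K (G ∪ P)ᶜ =
      W ⊓ vanishingOn K Eᶜ ⊓ vanishingOn K ((E \ G) \ P) := by
    rw [hcompl, vanishingOn_union, inf_assoc]
  rw [faceSign, cellEuler, ← hspan]
  classical exact if_congr (hG.isFace_union_iff P) rfl rfl

theorem sum_faceSign_Icc [Fintype ι] [DecidableEq ι] (hG : IsFace W G) (hE : IsFace W E)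
    (hGE : G ⊆ E) :
    ∑ F ∈ Finset.Icc G E, faceSign W F = if G = E then faceSign W E else 0 := by
  split_ifs with h
  · rw [h, Finset.Icc_self, Finset.sum_singleton]
  · obtain ⟨e, heW, hpos, hzero⟩ := hE
    have hne : (E \ G).Nonempty := Finset.sdiff_nonempty.2 fun hEG => h (hGE.antisymm hEG)
    rw [sum_faceSign_Icc_eq_coneEuler hG hGE]
    refine coneEuler_eq_zero hne (w := -e) (neg_mem ⟨heW, ?_⟩) (fun i hi => ?_) (by simp)
    · exact mem_vanishingOn.2 fun i hi => hzero i (Finset.mem_compl.1 hi)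
    · exact neg_neg_of_pos (hpos i (Finset.sdiff_subset hi))

theorem sum_faceSign_Icc_not_subset [Fintype ι] [DecidableEq ι] (hG : IsFace W G) (hS : IsFace W S)
    (hE : IsFace W E) (hGE : G ⊆ E) (hSE : S ⊆ E) :
    ∑ F ∈ Finset.Icc G E with ¬ S ⊆ F, faceSign W F =
      if G ∪ S = E ∧ ¬ S ⊆ G then -faceSign W E else 0 := by
  have hfilter : (Finset.Icc G E).filter (S ⊆ ·) = Finset.Icc (G ∪ S) E := by
    ext F
    simp only [Finset.mem_filter, Finset.mem_Icc, Finset.union_subset_iff]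
    tauto
  have hsum := Finset.sum_filter_add_sum_filter_not (Finset.Icc G E) (S ⊆ ·) (faceSign W)
  rw [hfilter, sum_faceSign_Icc (hG.union hS) hE (Finset.union_subset hGE hSE),
    sum_faceSign_Icc hG hE hGE] at hsum
  rw [eq_sub_of_add_eq' hsum]
  by_cases hSG : S ⊆ G
  · simp [Finset.union_eq_left.2 hSG, hSG]
  · have hne : G ≠ E := fun h => hSG (h ▸ hSE)
    by_cases h : G ∪ S = E <;> simp [h, hne, hSG]

end Faces

section LatticePoints

variable {ι K : Type*} [Field K] {W : Submodule K (ι → K)} {ℓ : (ι → K) →ₗ[K] K} {v x : ι → ℕ}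
  {E F : Finset ι} {s t : ℕ}

/-- The lattice points of the `s`-th dilate of the polytope of nonnegative vectors `x` of `W` with
`ℓ x = 1`. -/
def latticePoints (W : Submodule K (ι → K)) (ℓ : (ι → K) →ₗ[K] K) (s : ℕ) : Set (ι → ℕ) :=
  {x | (fun i => (x i : K)) ∈ W ∧ ℓ (fun i => (x i : K)) = s}

theorem add_mem_latticePoints_iff (hv : v ∈ latticePoints W ℓ t) :
    x + v ∈ latticePoints W ℓ (s + t) ↔ x ∈ latticePoints W ℓ s := by
  have hcast : (fun i => ((x + v) i : K)) = (fun i => (x i : K)) + fun i => (v i : K) :=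
    funext fun i => Nat.cast_add _ _
  simp only [latticePoints, Set.mem_ofPred_eq, hcast, map_add, W.add_mem_iff_left hv.1, hv.2,
    Nat.cast_add, add_left_inj]

variable [Fintype ι]

/-- The support of a vector of natural numbers, as a finset. -/
def supportFinset (x : ι → ℕ) : Finset ι :=
  {i | x i ≠ 0}

@[simp]
theorem mem_supportFinset {i : ι} : i ∈ supportFinset x ↔ x i ≠ 0 := by
  simp [supportFinset]

theorem supportFinset_eq_empty : supportFinset x = ∅ ↔ x = 0 := by
  simp [Finset.eq_empty_iff_forall_notMem, funext_iff]

theorem supportFinset_add [DecidableEq ι] (x y : ι → ℕ) :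
    supportFinset (x + y) = supportFinset x ∪ supportFinset y := by
  ext i
  simp only [mem_supportFinset, Finset.mem_union, Pi.add_apply]
  omega

theorem supportFinset_subset_iff_le (hv : v ≤ 1) : supportFinset v ⊆ supportFinset x ↔ v ≤ x := by
  refine forall_congr' fun i => ?_
  have hvi : v i ≤ 1 := hv i
  simp only [mem_supportFinset]
  omega

/-- The number of lattice points of the `s`-th dilate with support `F`: these are the points in the
relative interior of the face `F`. -/
noncomputable def openCount (W : Submodule K (ι → K)) (ℓ : (ι → K) →ₗ[K] K) (F : Finset ι)
    (s : ℕ) : ℕ :=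
  {x ∈ latticePoints W ℓ s | supportFinset x = F}.ncard

/-- The number of lattice points of the `s`-th dilate in the closed face `F`. -/
noncomputable def closedCount (W : Submodule K (ι → K)) (ℓ : (ι → K) →ₗ[K] K) (F : Finset ι)
    (s : ℕ) : ℕ :=
  {x ∈ latticePoints W ℓ s | supportFinset x ⊆ F}.ncard

theorem closedCount_empty (s : ℕ) : closedCount W ℓ ∅ s = openCount W ℓ ∅ s := by
  simp only [closedCount, openCount, Finset.subset_empty]

theorem closedCount_univ (s : ℕ) : closedCount W ℓ Finset.univ s = (latticePoints W ℓ s).ncard := by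
  simp only [closedCount, Finset.subset_univ, Set.sep_true]

theorem openCount_univ (s : ℕ) :
    openCount W ℓ Finset.univ s = {x ∈ latticePoints W ℓ s | ∀ i, 0 < x i}.ncard := by
  simp only [openCount, Finset.eq_univ_iff_forall, mem_supportFinset, Nat.pos_iff_ne_zero]

variable [LinearOrder K]

/-- The function on `ℤ` that counts the lattice points of the closed face `E` at `s ≥ 0` and, up to
the sign of reciprocity, those of the open face at `-s < 0`. -/
noncomputable def ehrhartFunction [DecidableEq ι] (W : Submodule K (ι → K)) (ℓ : (ι → K) →ₗ[K] K)
    (E : Finset ι) : ℤ → ℤ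
  | .ofNat s => closedCount W ℓ E s
  | .negSucc s => -faceSign W E * openCount W ℓ E (s + 1)

theorem ehrhartFunction_natCast [DecidableEq ι] (E : Finset ι) (s : ℕ) :
    ehrhartFunction W ℓ E s = closedCount W ℓ E s := rfl

theorem ehrhartFunction_neg_succ [DecidableEq ι] (E : Finset ι) (s : ℕ) :
    ehrhartFunction W ℓ E (-(s + 1)) = -faceSign W E * openCount W ℓ E (s + 1) := rfl

variable [IsStrictOrderedRing K]

theorem isFace_supportFinset (hx : (fun i => (x i : K)) ∈ W) : IsFace W (supportFinset x) :=
  ⟨_, hx, fun _ hi => Nat.cast_pos.2 (Nat.pos_of_ne_zero (mem_supportFinset.1 hi)), fun i hi => by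
    simpa using hi⟩

theorem supportFinset_nonempty (hv : v ∈ latticePoints W ℓ (s + 1)) :
    (supportFinset v).Nonempty := by
  rw [Finset.nonempty_iff_ne_empty, Ne, supportFinset_eq_empty]
  rintro rfl
  have h := hv.2
  simp only [Pi.zero_apply, Nat.cast_zero, ← Pi.zero_def, map_zero] at h
  exact Nat.cast_ne_zero.2 s.succ_ne_zero h.symm

/-- Every nonempty face of the polytope of nonnegative vectors `x` of `W` with `ℓ x = 1` contains a
`0`-`1` vector, which amounts to all its vertices being `0`-`1` vectors. -/
def HasZeroOneVertices (W : Submodule K (ι → K)) (ℓ : (ι → K) →ₗ[K] K) : Prop :=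
  ∀ E, IsFace W E → E.Nonempty → ∃ v ∈ latticePoints W ℓ 1, v ≤ 1 ∧ supportFinset v ⊆ E

namespace HasZeroOneVertices

theorem cast_apply_le (h : HasZeroOneVertices W ℓ) (hx : (fun i => (x i : K)) ∈ W) (i : ι) :
    (x i : K) ≤ ℓ fun i => (x i : K) := by
  induction x using WellFoundedLT.induction with
  | ind x ih =>
  obtain hx0 | hne := (supportFinset x).eq_empty_or_nonempty
  · rw [supportFinset_eq_empty] at hx0
    simp [hx0, ← Pi.zero_def]
  obtain ⟨v, hv, hv1, hvx⟩ := h _ (isFace_supportFinset hx) hne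
  obtain ⟨y, rfl⟩ := exists_add_of_le ((supportFinset_subset_iff_le hv1).1 hvx)
  have hcast : (fun i => ((v + y) i : K)) = (fun i => (v i : K)) + fun i => (y i : K) :=
    funext fun i => Nat.cast_add _ _
  rw [hcast, W.add_mem_iff_right hv.1] at hx
  have hlt : y < v + y := lt_add_of_pos_left y <| pos_iff_ne_zero.2 <|
    supportFinset_eq_empty.not.1 (supportFinset_nonempty hv).ne_empty
  have hvi : (v i : K) ≤ 1 := mod_cast hv1 i
  rw [hcast, map_add, hv.2, Nat.cast_one, Pi.add_apply, Nat.cast_add]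
  exact add_le_add hvi (ih y hlt hx)

theorem apply_le (h : HasZeroOneVertices W ℓ) (hx : x ∈ latticePoints W ℓ s) (i : ι) : x i ≤ s := by
  have hi := h.cast_apply_le hx.1 i
  rwa [hx.2, Nat.cast_le] at hi

theorem latticePoints_finite (h : HasZeroOneVertices W ℓ) (s : ℕ) :
    (latticePoints W ℓ s).Finite :=
  (Set.Finite.pi' fun _ => Set.finite_Iic s).subset fun _ hx => h.apply_le hx

theorem latticePoints_zero (h : HasZeroOneVertices W ℓ) : latticePoints W ℓ 0 = {0} := by
  ext x
  refine ⟨fun hx => funext fun i => Nat.le_zero.1 (h.apply_le hx i), ?_⟩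
  rintro rfl
  simp [latticePoints, ← Pi.zero_def]

end HasZeroOneVertices

theorem openCount_eq_zero (hF : ¬ IsFace W F) (s : ℕ) : openCount W ℓ F s = 0 := by
  rw [openCount, Set.sep_eq_empty_iff_mem_false.2, Set.ncard_empty]
  rintro x hx rfl
  exact hF (isFace_supportFinset hx.1)

theorem openCount_empty_succ (s : ℕ) : openCount W ℓ ∅ (s + 1) = 0 := by
  rw [openCount, Set.sep_eq_empty_iff_mem_false.2, Set.ncard_empty]
  exact fun x hx => (supportFinset_nonempty hx).ne_empty

namespace HasZeroOneVertices

theorem closedCount_zero (h : HasZeroOneVertices W ℓ) (E : Finset ι) : closedCount W ℓ E 0 = 1 := by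
  have hset : {x ∈ latticePoints W ℓ 0 | supportFinset x ⊆ E} = {0} := by
    rw [h.latticePoints_zero, Set.sep_eq_self_iff_mem_true]
    rintro x rfl
    simp [supportFinset_eq_empty.2]
  rw [closedCount, hset, Set.ncard_singleton]

theorem openCount_zero (h : HasZeroOneVertices W ℓ) (hE : E.Nonempty) :
    openCount W ℓ E 0 = 0 := by
  rw [openCount, h.latticePoints_zero, Set.sep_eq_empty_iff_mem_false.2, Set.ncard_empty]
  rintro x rfl hx
  exact hE.ne_empty (hx.symm.trans (supportFinset_eq_empty.2 rfl))

theorem sum_openCount (h : HasZeroOneVertices W ℓ) (𝒜 : Finset (Finset ι)) (s : ℕ) :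
    ∑ F ∈ 𝒜, openCount W ℓ F s = {x ∈ latticePoints W ℓ s | supportFinset x ∈ 𝒜}.ncard := by
  classical
  induction 𝒜 using Finset.induction_on with
  | empty => simp
  | insert F 𝒜 hF ih =>
    rw [Finset.sum_insert hF, ih, openCount, ← Set.ncard_union_eq ?_
      ((h.latticePoints_finite s).sep _) ((h.latticePoints_finite s).sep _)]
    · simp only [Finset.mem_insert, Set.sep_or]
    · exact Set.disjoint_left.2 fun x hx hx' => hF (hx.2 ▸ hx'.2)

theorem sum_openCount_powerset (h : HasZeroOneVertices W ℓ) (E : Finset ι) (s : ℕ) :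
    ∑ F ∈ E.powerset, openCount W ℓ F s = closedCount W ℓ E s := by
  simp only [h.sum_openCount, Finset.mem_powerset, closedCount]

variable [DecidableEq ι]

/-- Subtracting `v` from the lattice points that dominate it. -/
theorem sum_openCount_succ (h : HasZeroOneVertices W ℓ) (hv : v ∈ latticePoints W ℓ 1) (hv1 : v ≤ 1)
    (𝒜 : Finset (Finset ι)) (s : ℕ) :
    ∑ F ∈ 𝒜 with supportFinset v ⊆ F, openCount W ℓ F (s + 1) =
      ∑ F with F ∪ supportFinset v ∈ 𝒜, openCount W ℓ F s := by
  rw [h.sum_openCount, h.sum_openCount,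
    ← Set.ncard_image_of_injective {x ∈ latticePoints W ℓ s | _} (add_left_injective v)]
  congr 1
  ext x
  simp only [Set.mem_image, Set.mem_ofPred_eq, Finset.mem_filter, Finset.mem_univ, true_and]
  constructor
  · rintro ⟨hx, hx𝒜, hvx⟩
    obtain ⟨y, rfl⟩ := exists_add_of_le ((supportFinset_subset_iff_le hv1).1 hvx)
    rw [add_comm v y] at hx hx𝒜 ⊢
    rw [supportFinset_add] at hx𝒜
    exact ⟨y, ⟨(add_mem_latticePoints_iff hv).1 hx, hx𝒜⟩, rfl⟩
  · rintro ⟨y, ⟨hy, hy𝒜⟩, rfl⟩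
    refine ⟨(add_mem_latticePoints_iff hv).2 hy, ?_, ?_⟩ <;> rw [supportFinset_add]
    exacts [hy𝒜, Finset.subset_union_right]

theorem closedCount_succ (h : HasZeroOneVertices W ℓ) (hv : v ∈ latticePoints W ℓ 1) (hv1 : v ≤ 1)
    (hvE : supportFinset v ⊆ E) (s : ℕ) :
    closedCount W ℓ E (s + 1) = closedCount W ℓ E s +
      ∑ F ∈ E.powerset with ¬ supportFinset v ⊆ F, openCount W ℓ F (s + 1) := by
  have hfilter : (Finset.univ.filter fun F => F ∪ supportFinset v ∈ E.powerset) = E.powerset := by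
    ext F
    simp [Finset.union_subset_iff, hvE]
  rw [← h.sum_openCount_powerset E (s + 1), ← Finset.sum_filter_add_sum_filter_not _
    (supportFinset v ⊆ ·), h.sum_openCount_succ hv hv1, hfilter, h.sum_openCount_powerset]

theorem openCount_succ (h : HasZeroOneVertices W ℓ) (hv : v ∈ latticePoints W ℓ 1) (hv1 : v ≤ 1)
    (hvE : supportFinset v ⊆ E) (s : ℕ) :
    openCount W ℓ E (s + 1) = openCount W ℓ E s +
      ∑ F ∈ E.powerset with F ∪ supportFinset v = E ∧ ¬ supportFinset v ⊆ F,
        openCount W ℓ F s := by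
  have hsucc := h.sum_openCount_succ hv hv1 {E} s
  rw [Finset.filter_singleton, if_pos hvE, Finset.sum_singleton] at hsucc
  rw [hsucc, ← Finset.sum_filter_add_sum_filter_not _ (supportFinset v ⊆ ·), Finset.filter_filter,
    Finset.filter_filter]
  have hsubset : (Finset.univ.filter fun F => F ∪ supportFinset v ∈ ({E} : Finset (Finset ι)) ∧
      supportFinset v ⊆ F) = {E} := by
    ext F
    simp only [Finset.mem_filter, Finset.mem_univ, true_and, Finset.mem_singleton]
    refine ⟨fun ⟨hF, hvF⟩ => Finset.union_eq_left.2 hvF ▸ hF, ?_⟩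
    rintro rfl
    exact ⟨Finset.union_eq_left.2 hvE, hvE⟩
  rw [hsubset, Finset.sum_singleton]
  refine congrArg _ (Finset.sum_congr (Finset.ext fun F => ?_) fun _ _ => rfl)
  simp only [Finset.mem_filter, Finset.mem_univ, true_and, Finset.mem_singleton,
    Finset.mem_powerset, iff_and_self]
  exact fun hF => hF.1 ▸ Finset.subset_union_left

theorem sum_faceSign_mul_closedCount (h : HasZeroOneVertices W ℓ) (hv : v ∈ latticePoints W ℓ 1)
    (hv1 : v ≤ 1) (hvE : supportFinset v ⊆ E) (hE : IsFace W E) (s : ℕ) :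
    ∑ F ∈ E.powerset with ¬ supportFinset v ⊆ F, faceSign W F * closedCount W ℓ F s =
      -faceSign W E * (openCount W ℓ E (s + 1) - openCount W ℓ E s) := by
  calc ∑ F ∈ E.powerset with ¬ supportFinset v ⊆ F, faceSign W F * (closedCount W ℓ F s : ℤ)
    _ = ∑ F ∈ E.powerset with ¬ supportFinset v ⊆ F,
          ∑ G ∈ F.powerset, faceSign W F * openCount W ℓ G s := by
        simp only [← h.sum_openCount_powerset, Nat.cast_sum, Finset.mul_sum]
    _ = ∑ G ∈ E.powerset, ∑ F ∈ Finset.Icc G E with ¬ supportFinset v ⊆ F,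
          faceSign W F * openCount W ℓ G s := by
        refine Finset.sum_comm' fun F G => ?_
        simp only [Finset.mem_filter, Finset.mem_powerset, Finset.mem_Icc]
        have htrans : G ⊆ F → F ⊆ E → G ⊆ E := Finset.Subset.trans
        tauto
    _ = ∑ G ∈ E.powerset, if G ∪ supportFinset v = E ∧ ¬ supportFinset v ⊆ G then
          -faceSign W E * openCount W ℓ G s else 0 := by
        refine Finset.sum_congr rfl fun G hG => ?_
        rw [← Finset.sum_mul]
        by_cases hGW : IsFace W G
        · rw [sum_faceSign_Icc_not_subset hGW (isFace_supportFinset hv.1) hE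
            (Finset.mem_powerset.1 hG) hvE, ite_mul, zero_mul]
        · simp [openCount_eq_zero hGW]
    _ = -faceSign W E * (openCount W ℓ E (s + 1) - openCount W ℓ E s) := by
        rw [← Finset.sum_filter, ← Finset.mul_sum, h.openCount_succ hv hv1 hvE s]
        push_cast
        ring

theorem ehrhartFunction_neg (h : HasZeroOneVertices W ℓ) (hE : E.Nonempty) (s : ℕ) :
    ehrhartFunction W ℓ E (-s) = -faceSign W E * openCount W ℓ E s + openCount W ℓ ∅ s := by
  cases s with
  | zero =>
    rw [Nat.cast_zero, neg_zero, ← Nat.cast_zero, ehrhartFunction_natCast, h.closedCount_zero,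
      h.openCount_zero hE, ← closedCount_empty, h.closedCount_zero]
    simp
  | succ s =>
    rw [openCount_empty_succ, Nat.cast_succ, ehrhartFunction_neg_succ, Nat.cast_zero, add_zero]

theorem ehrhartFunction_sub (h : HasZeroOneVertices W ℓ) (hv : v ∈ latticePoints W ℓ 1)
    (hv1 : v ≤ 1) (hvE : supportFinset v ⊆ E) (hE : IsFace W E) (k : ℤ) :
    ehrhartFunction W ℓ E k - ehrhartFunction W ℓ E (k - 1) =
      -∑ F ∈ (E.powerset.filter (¬ supportFinset v ⊆ ·)).erase ∅,
        faceSign W F * ehrhartFunction W ℓ F (-k) := by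
  have hvne := supportFinset_nonempty hv
  have hempty : ∅ ∈ E.powerset.filter (¬ supportFinset v ⊆ ·) := by
    simp [Finset.subset_empty, hvne.ne_empty]
  obtain ⟨s, rfl | rfl⟩ : ∃ s : ℕ, k = s + 1 ∨ k = -s := by
    rcases lt_or_ge 0 k with hk | hk
    exacts [⟨(k - 1).toNat, by omega⟩, ⟨(-k).toNat, by omega⟩]
  · have hF (F) : faceSign W F * ehrhartFunction W ℓ F (-(s + 1)) = -openCount W ℓ F (s + 1) := by
      by_cases hFW : IsFace W F
      · rw [ehrhartFunction_neg_succ, neg_mul, mul_neg, ← mul_assoc, hFW.faceSign_mul_self, one_mul]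
      · simp [openCount_eq_zero hFW, faceSign, hFW]
    simp only [hF, Finset.sum_neg_distrib, neg_neg]
    rw [add_sub_cancel_right, ← Nat.cast_succ, ehrhartFunction_natCast, ehrhartFunction_natCast,
      h.closedCount_succ hv hv1 hvE, Finset.sum_erase _ (by simp [openCount_empty_succ])]
    push_cast
    ring
  · have hsum := h.sum_faceSign_mul_closedCount hv hv1 hvE hE s
    rw [← Finset.add_sum_erase _ _ hempty, faceSign_empty, one_mul, closedCount_empty] at hsum
    simp only [neg_neg, ehrhartFunction_natCast]
    rw [h.ehrhartFunction_neg (hvne.mono hvE), ← neg_add', ehrhartFunction_neg_succ]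
    linarith

theorem exists_polynomial_eval_eq_ehrhartFunction (h : HasZeroOneVertices W ℓ) (hE : IsFace W E)
    (hne : E.Nonempty) : ∃ p : ℚ[X], ∀ k : ℤ, p.eval (k : ℚ) = ehrhartFunction W ℓ E k := by
  induction E using Finset.strongInduction with
  | H E ih =>
  obtain ⟨v, hv, hv1, hvE⟩ := h E hE hne
  let 𝒜 := (E.powerset.filter (¬ supportFinset v ⊆ ·)).erase ∅
  have hpoly (F) (hF : F ∈ 𝒜) :
      ∃ q : ℚ[X], ∀ k : ℤ,
        q.eval (k : ℚ) = (faceSign W F * ehrhartFunction W ℓ F (-k) : ℤ) := by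
    simp only [𝒜, Finset.mem_erase, Finset.mem_filter, Finset.mem_powerset] at hF
    obtain ⟨hF0, hFE, hvF⟩ := hF
    by_cases hFW : IsFace W F
    · have hlt : F ⊂ E := hFE.ssubset_of_ne fun hEq => hvF (hEq ▸ hvE)
      obtain ⟨p, hp⟩ := ih F hlt hFW (Finset.nonempty_iff_ne_empty.2 hF0)
      refine ⟨.C (faceSign W F : ℚ) * p.comp (-.X), fun k => ?_⟩
      simp [← hp]
    · exact ⟨0, fun k => by simp [faceSign, hFW]⟩
  choose! q hq using hpoly
  refine exists_polynomial_of_sub_eq_eval (q := -∑ F ∈ 𝒜, q F) fun k => ?_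
  rw [← Int.cast_sub, h.ehrhartFunction_sub hv hv1 hvE hE, Polynomial.eval_neg,
    Polynomial.eval_finsetSum, Finset.sum_congr rfl fun F hF => hq F hF k]
  push_cast
  rfl

end HasZeroOneVertices

theorem HasZeroOneVertices.exists_ehrhartPolynomial_reciprocity [Nonempty ι]
    (h : HasZeroOneVertices W ℓ) (hW : IsFace W Finset.univ) :
    ∃ p : ℚ[X], (∀ s : ℕ, p.eval (s : ℚ) = (latticePoints W ℓ s).ncard) ∧
      ∀ s : ℕ, 0 < s → ({x ∈ latticePoints W ℓ s | ∀ i, 0 < x i}.ncard : ℚ) =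
        (-1) ^ (Module.finrank K W + 1) * p.eval (-(s : ℚ)) := by
  classical
  obtain ⟨p, hp⟩ := h.exists_polynomial_eval_eq_ehrhartFunction hW Finset.univ_nonempty
  refine ⟨p, fun s => ?_, fun s hs => ?_⟩
  · simpa [ehrhartFunction_natCast, closedCount_univ] using hp s
  · obtain ⟨s, rfl⟩ := Nat.exists_eq_add_one.2 hs
    have hps := hp (-(s + 1))
    rw [ehrhartFunction_neg_succ, faceSign_univ hW, openCount_univ] at hps
    push_cast at hps ⊢
    rw [hps, ← mul_assoc, pow_succ, mul_neg_one, neg_mul_neg, ← mul_pow, neg_one_mul, neg_neg,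
      one_pow, one_mul]

end LatticePoints

section SemimagicSquares

theorem card_matrix_subtype_eq_ncard {m n R : Type*} (Q : Matrix m n R → Prop) :
    Nat.card {M : Matrix m n R // Q M} =
      {x : m × n → R | Q (Matrix.of fun i j => x (i, j))}.ncard := by
  rw [← Nat.card_coe_set_eq]
  exact Nat.card_congr ((Equiv.curry m n R).symm.subtypeEquiv fun _ => Iff.rfl)

variable {α K : Type*} [Fintype α] [Field K]

/-- The square arrays all of whose row and column sums agree, as functions on `α × α`. -/
def semimagicSubspace (α K : Type*) [Fintype α] [Field K] : Submodule K (α × α → K) where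
  carrier := {x | ∃ s, (∀ a, ∑ b, x (a, b) = s) ∧ ∀ b, ∑ a, x (a, b) = s}
  add_mem' := by
    rintro x y ⟨s, hs, hs'⟩ ⟨t, ht, ht'⟩
    exact ⟨s + t, fun a => by simp [Finset.sum_add_distrib, hs, ht],
      fun b => by simp [Finset.sum_add_distrib, hs', ht']⟩
  zero_mem' := ⟨0, by simp, by simp⟩
  smul_mem' := by
    rintro c x ⟨s, hs, hs'⟩
    exact ⟨c * s, fun a => by simp [← Finset.mul_sum, hs], fun b => by simp [← Finset.mul_sum, hs']⟩

/-- The sum of the row `a` of a square array; on nonnegative arrays of `semimagicSubspace α K` the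
equation `rowSum a x = 1` cuts out the Birkhoff polytope. -/
def rowSum (a : α) : (α × α → K) →ₗ[K] K :=
  ∑ b, LinearMap.proj (a, b)

theorem rowSum_apply (a : α) (x : α × α → K) : rowSum a x = ∑ b, x (a, b) := by
  simp [rowSum]

theorem latticePoints_semimagicSubspace [CharZero K] (a : α) (s : ℕ) :
    latticePoints (semimagicSubspace α K) (rowSum a) s =
      {x | (∀ a, ∑ b, x (a, b) = s) ∧ ∀ b, ∑ a, x (a, b) = s} := by
  ext x
  constructor
  · rintro ⟨⟨c, hrow, hcol⟩, hc⟩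
    obtain rfl : c = s := by rw [← hrow a, ← hc, rowSum_apply]
    exact ⟨fun a => Nat.cast_injective (R := K) (by simpa using hrow a),
      fun b => Nat.cast_injective (R := K) (by simpa using hcol b)⟩
  · rintro ⟨hrow, hcol⟩
    have hrow' (a) : ∑ b, (x (a, b) : K) = s := by rw [← hrow a, Nat.cast_sum]
    have hcol' (b) : ∑ a, (x (a, b) : K) = s := by rw [← hcol b, Nat.cast_sum]
    exact ⟨⟨s, hrow', hcol'⟩, (rowSum_apply ..).trans (hrow' a)⟩

section Dimension

variable {M : Type*} [AddCommGroup M] {m : ℕ}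

/-- Appends to `v` the entry that makes the sum equal to `s`. -/
def snocSum (s : M) (v : Fin m → M) : Fin (m + 1) → M :=
  Fin.snoc v (s - ∑ i, v i)

theorem snocSum_castSucc (s : M) (v : Fin m → M) (i : Fin m) : snocSum s v i.castSucc = v i :=
  Fin.snoc_castSucc ..

theorem snocSum_last (s : M) (v : Fin m → M) : snocSum s v (Fin.last m) = s - ∑ i, v i :=
  Fin.snoc_last ..

theorem sum_snocSum (s : M) (v : Fin m → M) : ∑ i, snocSum s v i = s := by
  simp [Fin.sum_univ_castSucc, snocSum_castSucc, snocSum_last]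

theorem eq_zero_of_sum_eq_zero_of_castSucc {v : Fin (m + 1) → M}
    (hv : ∀ i : Fin m, v i.castSucc = 0) (hsum : ∑ i, v i = 0) (i : Fin (m + 1)) : v i = 0 := by
  rw [Fin.sum_univ_castSucc, Finset.sum_eq_zero fun i _ => hv i, zero_add] at hsum
  exact Fin.lastCases hsum hv i

/-- The coordinates of a semi-magic array given by the block outside its last row and column,
together with its line sum. -/
def blockAndLineSum (K : Type*) [Field K] (m : ℕ) :
    semimagicSubspace (Fin (m + 1)) K →ₗ[K] (Fin m × Fin m → K) × K :=
  ((LinearMap.funLeft K K (Prod.map Fin.castSucc Fin.castSucc)).prod (rowSum 0)) ∘ₗ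
    (semimagicSubspace (Fin (m + 1)) K).subtype

theorem blockAndLineSum_injective : Function.Injective (blockAndLineSum K m) := by
  rw [injective_iff_map_eq_zero]
  rintro ⟨x, s, hrow, hcol⟩ hx
  have hblock (i j : Fin m) : x (i.castSucc, j.castSucc) = 0 :=
    congrFun (congrArg Prod.fst hx) (i, j)
  obtain rfl : s = 0 := by
    rw [← hrow 0, ← rowSum_apply]
    exact congrArg Prod.snd hx
  have htop (i : Fin m) := eq_zero_of_sum_eq_zero_of_castSucc (hblock i) (hrow i.castSucc)
  ext ⟨i, j⟩
  exact eq_zero_of_sum_eq_zero_of_castSucc (v := fun i => x (i, j)) (htop · j) (hcol j) i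

theorem blockAndLineSum_surjective : Function.Surjective (blockAndLineSum K m) := by
  rintro ⟨A, s⟩
  let top (i : Fin m) : Fin (m + 1) → K := snocSum s fun j => A (i, j)
  let x : Fin (m + 1) → Fin (m + 1) → K := snocSum (fun _ => s) top
  have hcol (j) : ∑ i, x i j = s := by
    rw [← Finset.sum_apply, sum_snocSum]
  have hrow (i) : ∑ j, x i j = s := by
    induction i using Fin.lastCases with
    | last =>
      simp only [x, snocSum_last, Pi.sub_apply, Finset.sum_apply, Finset.sum_sub_distrib]
      rw [Finset.sum_comm]
      simp [top, sum_snocSum, add_mul]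
    | cast i => simp only [x, top, snocSum_castSucc, sum_snocSum]
  refine ⟨⟨fun p => x p.1 p.2, s, hrow, hcol⟩, Prod.ext (funext fun p => ?_) ?_⟩
  · simp [blockAndLineSum, LinearMap.funLeft, x, top, snocSum_castSucc]
  · exact (rowSum_apply ..).trans (hrow 0)

theorem finrank_semimagicSubspace :
    Module.finrank K (semimagicSubspace (Fin (m + 1)) K) = m ^ 2 + 1 := by
  rw [(LinearEquiv.ofBijective (blockAndLineSum K m)
    ⟨blockAndLineSum_injective, blockAndLineSum_surjective⟩).finrank_eq]
  simp [sq]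

end Dimension

variable [LinearOrder K] [IsStrictOrderedRing K]

theorem isFace_univ_semimagicSubspace : IsFace (semimagicSubspace α K) Finset.univ :=
  ⟨1, ⟨Fintype.card α, by simp, by simp⟩, by simp, by simp⟩

theorem exists_perm_forall_apply_pos_of_mem_doublyStochastic [DecidableEq α] {M : Matrix α α K}
    (hM : M ∈ doublyStochastic K α) : ∃ σ : Equiv.Perm α, ∀ a, 0 < M a (σ a) := by
  obtain ⟨w, hw0, hw1, rfl⟩ := exists_eq_sum_perm_of_mem_doublyStochastic hM
  obtain ⟨σ, -, hσ⟩ := Finset.exists_ne_zero_of_sum_ne_zero (hw1.trans_ne one_ne_zero)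
  refine ⟨σ, fun a => ?_⟩
  rw [Matrix.sum_apply]
  refine Finset.sum_pos' (fun τ _ => mul_nonneg (hw0 τ) ?_) ⟨σ, Finset.mem_univ σ, ?_⟩
  · simp only [Equiv.Perm.permMatrix, PEquiv.toMatrix_apply]
    split_ifs <;> simp
  · simpa [Equiv.Perm.permMatrix, PEquiv.toMatrix_apply, Equiv.toPEquiv_apply]
      using (hw0 σ).lt_of_ne' hσ

theorem exists_perm_forall_mem_of_isFace {E : Finset (α × α)}
    (hE : IsFace (semimagicSubspace α K) E) (hne : E.Nonempty) :
    ∃ σ : Equiv.Perm α, ∀ a, (a, σ a) ∈ E := by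
  classical
  obtain ⟨x, ⟨s, hrow, hcol⟩, hpos, hzero⟩ := hE
  have hx (p) : 0 ≤ x p := by
    by_cases hp : p ∈ E
    exacts [(hpos p hp).le, (hzero p hp).ge]
  obtain ⟨⟨a, b⟩, hab⟩ := hne
  have hs : 0 < s := by
    rw [← hrow a]
    exact Finset.sum_pos' (fun _ _ => hx _) ⟨b, Finset.mem_univ b, hpos _ hab⟩
  have hM : (Matrix.of fun a b => x (a, b) / s) ∈ doublyStochastic K α := by
    simp only [mem_doublyStochastic_iff_sum, Matrix.of_apply, ← Finset.sum_div, hrow, hcol,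
      div_self hs.ne', implies_true, and_true]
    exact fun _ _ => div_nonneg (hx _) hs.le
  obtain ⟨σ, hσ⟩ := exists_perm_forall_apply_pos_of_mem_doublyStochastic hM
  refine ⟨σ, fun a => ?_⟩
  by_contra ha
  simpa [hzero _ ha] using hσ a

theorem hasZeroOneVertices_semimagicSubspace (a : α) :
    HasZeroOneVertices (semimagicSubspace α K) (rowSum a) := by
  classical
  intro E hE hne
  obtain ⟨σ, hσ⟩ := exists_perm_forall_mem_of_isFace hE hne
  refine ⟨fun p => if σ p.1 = p.2 then 1 else 0, ?_, fun p => ?_, fun p hp => ?_⟩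
  · rw [latticePoints_semimagicSubspace]
    exact ⟨by simp, by simp [← Equiv.eq_symm_apply]⟩
  · dsimp only
    split_ifs <;> simp
  · have hp : σ p.1 = p.2 := by simpa using hp
    exact (Prod.ext rfl hp : (p.1, σ p.1) = p) ▸ hσ p.1

end SemimagicSquares

/-- For `0 < t < n` the left-hand side vanishes, which gives the zeros `-1, …, -(n - 1)` of `H`. -/
theorem birkhoff_reciprocity_general (n : ℕ) (hn : 1 ≤ n) (H : Polynomial ℚ)
    (hH : ∀ s : ℕ, 0 < s →
      H.eval (s : ℚ) = Nat.card {M : Matrix (Fin n) (Fin n) ℕ //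
        (∀ i, ∑ j, M i j = s) ∧ (∀ j, ∑ i, M i j = s)}) :
    ∀ t : ℕ, 0 < t →
      (Nat.card {M : Matrix (Fin n) (Fin n) ℕ //
          (∀ i j, 1 ≤ M i j) ∧ (∀ i, ∑ j, M i j = t) ∧
            (∀ j, ∑ i, M i j = t)} : ℚ) =
        (-1) ^ ((n - 1) ^ 2) * H.eval (-(t : ℚ)) := by
  obtain ⟨m, rfl⟩ := Nat.exists_eq_add_of_le' hn
  obtain ⟨p, hp, hp_neg⟩ := (hasZeroOneVertices_semimagicSubspace (K := ℚ)
    (0 : Fin (m + 1))).exists_ehrhartPolynomial_reciprocity isFace_univ_semimagicSubspace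
  simp only [finrank_semimagicSubspace, latticePoints_semimagicSubspace] at hp hp_neg
  obtain rfl : H = p := eq_of_forall_eval_natCast_eq fun s hs => by
    rw [hH s hs, hp, card_matrix_subtype_eq_ncard]
    rfl
  intro t ht
  have hsign : (-1 : ℚ) ^ (m ^ 2 + 1 + 1) = (-1) ^ (m + 1 - 1) ^ 2 := by
    rw [Nat.add_sub_cancel, pow_succ, pow_succ, mul_assoc, neg_one_mul, neg_neg, mul_one]
  rw [← hsign, ← hp_neg t ht, card_matrix_subtype_eq_ncard]
  congr 2
  ext x
  simp only [Set.mem_ofPred_eq, Prod.forall]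
  exact and_comm

/-- Ehrhart–Macdonald reciprocity for the Birkhoff polytope: if `H` is the
Ehrhart polynomial of `B_n` (counting semi-magic squares), then for every
`t ≥ n` the number of `n × n` positive-integer matrices with all row and
column sums equal to `t` is `(−1)^{(n−1)²} H(−t)`. -/
theorem birkhoff_reciprocity (n : ℕ) (hn : 1 ≤ n) (H : Polynomial ℚ)
    (hH : ∀ s : ℕ, 0 < s →
      H.eval (s : ℚ) = Nat.card {M : Matrix (Fin n) (Fin n) ℕ //
        (∀ i, ∑ j, M i j = s) ∧ (∀ j, ∑ i, M i j = s)}) :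
    ∀ t : ℕ, n ≤ t →
      (Nat.card {M : Matrix (Fin n) (Fin n) ℕ //
          (∀ i j, 1 ≤ M i j) ∧ (∀ i, ∑ j, M i j = t) ∧
            (∀ j, ∑ i, M i j = t)} : ℚ) =
        (-1) ^ ((n - 1) ^ 2) * H.eval (-(t : ℚ)) := by
  exact fun t ht => birkhoff_reciprocity_general n hn H hH t (hn.trans ht)
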